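/- arXiv:2211.16216 — 10 statements merged into one kernel-verified Lean document; each statement's English description precedes it below -/
import Mathlib

section
/- For all real numbers f and f', if ρ is a random variable uniformly distributed on the interval [0,1), then E_ρ[ |⌈f + ρ⌉ − ⌈f' + ρ⌉| ] = |f − f'|; equivalently, ∫_0^1 |⌈f + ρ⌉ − ⌈f' + ρ⌉| dρ = |f − f'|. -/
open MeasureTheory

/-!
The function `x ↦ ⌈x⌉ - x` has period `1`, so its integral over any interval of length `1` is the
same. Hence `∫ ρ in 0..1, ⌈f + ρ⌉` equals `f` plus a constant independent of `f`
(`integral_ceil_add`). By symmetry one may take `f' ≤ f`; monotonicity of the ceiling then removes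
the absolute value, and the constants cancel in the difference of the two integrals.
-/

lemma intervalIntegrable_ceil_add (f a b : ℝ) :
    IntervalIntegrable (fun ρ : ℝ => (⌈f + ρ⌉ : ℝ)) volume a b := by
  apply Monotone.intervalIntegrable
  intro x y hxy
  have : f + x ≤ f + y := by linarith
  exact Int.cast_le.2 (Int.ceil_mono this)

/-- Shifting the argument of the ceiling by `f` shifts its mean over a period by exactly `f`. -/
lemma integral_ceil_add (f : ℝ) :
    ∫ ρ in (0 : ℝ)..1, (⌈f + ρ⌉ : ℝ) = f + ∫ ρ in (0 : ℝ)..1, (⌈ρ⌉ : ℝ) := by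
  have hper : Function.Periodic (fun x : ℝ => (⌈x⌉ : ℝ) - x) 1 := by
    intro x
    simp
  have hint : IntervalIntegrable (fun ρ : ℝ => (⌈ρ⌉ : ℝ)) volume 0 1 := by
    simpa using intervalIntegrable_ceil_add 0 0 1
  have h := hper.intervalIntegral_add_eq f 0
  have hshift : ∫ x in f..f + 1, ((⌈x⌉ : ℝ) - x)
      = ∫ ρ in (0 : ℝ)..1, ((⌈f + ρ⌉ : ℝ) - (f + ρ)) := by
    rw [intervalIntegral.integral_comp_add_left (fun x : ℝ => (⌈x⌉ : ℝ) - x) f, add_zero]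
  rw [hshift, zero_add, intervalIntegral.integral_sub (intervalIntegrable_ceil_add f 0 1)
      (Continuous.intervalIntegrable (by fun_prop) _ _),
    intervalIntegral.integral_sub hint (Continuous.intervalIntegrable (by fun_prop) _ _),
    intervalIntegral.integral_add (by simp) (Continuous.intervalIntegrable (by fun_prop) _ _)] at h
  simp only [intervalIntegral.integral_const, sub_zero, one_smul] at h
  linarith

lemma integral_abs_ceil_sub_of_le {f f' : ℝ} (hle : f' ≤ f) :
    ∫ ρ in (0 : ℝ)..1, |(⌈f + ρ⌉ : ℝ) - (⌈f' + ρ⌉ : ℝ)| = f - f' := by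
  have habs : ∀ ρ : ℝ, |(⌈f + ρ⌉ : ℝ) - (⌈f' + ρ⌉ : ℝ)| = (⌈f + ρ⌉ : ℝ) - (⌈f' + ρ⌉ : ℝ) := by
    intro ρ
    have h : f' + ρ ≤ f + ρ := by linarith
    exact abs_of_nonneg (sub_nonneg.2 (by exact_mod_cast Int.ceil_mono h))
  simp only [habs]
  rw [intervalIntegral.integral_sub (intervalIntegrable_ceil_add f 0 1)
    (intervalIntegrable_ceil_add f' 0 1), integral_ceil_add f, integral_ceil_add f']
  ring

/-- For all real `f`, `f'`, if `ρ` is uniformly distributed on `[0,1)` then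
`E_ρ[|⌈f + ρ⌉ − ⌈f' + ρ⌉|] = |f − f'|`, i.e.
`∫_0^1 |⌈f + ρ⌉ − ⌈f' + ρ⌉| dρ = |f − f'|`. -/
theorem stmt0 (f f' : ℝ) :
    ∫ ρ in Set.Ico (0 : ℝ) 1, |(⌈f + ρ⌉ : ℝ) - (⌈f' + ρ⌉ : ℝ)| = |f - f'| := by
  rw [integral_Ico_eq_integral_Ioc, ← intervalIntegral.integral_of_le zero_le_one]
  rcases le_total f' f with h | h
  · rw [integral_abs_ceil_sub_of_le h, abs_of_nonneg (sub_nonneg.2 h)]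
  · simp only [abs_sub_comm (⌈f + _⌉ : ℝ), abs_sub_comm f f']
    rw [integral_abs_ceil_sub_of_le h, abs_of_nonneg (sub_nonneg.2 h)]
end

section
/- Let E be a finite set, let (S_i)_{i∈I} be a finite family of pairwise disjoint subsets of E, and let x^{(0)}, x^{(1)}, …, x^{(T)} ∈ ℝ^E. For each t and i define f^{(t)}_i = Σ_{e∈S_i} x^{(t)}_e, and for ρ ∈ [0,1) define b^{(t)}_i(ρ) = ⌈2 f^{(t)}_i + ρ⌉. Then, for ρ uniformly distributed on [0,1), E_ρ[ Σ_{t=1}^{T} Σ_{i∈I} |b^{(t)}_i(ρ) − b^{(t−1)}_i(ρ)| ] ≤ 2 Σ_{t=1}^{T} Σ_{e∈E} |x^{(t)}_e − x^{(t−1)}_e|. -/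
open MeasureTheory

/-!
Since `y ↦ ⌈y⌉ - y` has period `1`, the mean of `⌈a + ρ⌉` over a unit interval is `a` plus a
constant independent of `a` (`integral_ceil_sub`). As `⌈a + ρ⌉` is monotone in `a`, the difference
`⌈a + ρ⌉ - ⌈b + ρ⌉` has constant sign in `ρ`, so the mean of its absolute value is exactly `|a - b|`
(`integral_abs_ceil_sub`). With `a = 2 f t i` and `b = 2 f (t-1) i`, the claim follows from
linearity of the integral, the triangle inequality on each `S i`, and disjointness of the `S i`.
-/

lemma intervalIntegrable_ceil (a u v : ℝ) :
    IntervalIntegrable (fun ρ : ℝ => (⌈a + ρ⌉ : ℝ)) volume u v := by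
  apply Monotone.intervalIntegrable
  intro p q hpq
  have h : ⌈a + p⌉ ≤ ⌈a + q⌉ := Int.ceil_mono (by linarith)
  exact Int.cast_le.2 h

lemma integral_ceil (a : ℝ) :
    ∫ ρ in (0 : ℝ)..1, (⌈a + ρ⌉ : ℝ) = a + ∫ ρ in (0 : ℝ)..1, (⌈ρ⌉ : ℝ) := by
  have hper : Function.Periodic (fun y : ℝ => (⌈y⌉ : ℝ) - y) 1 := by
    intro y
    simp
  have h := hper.intervalIntegral_add_eq a 0
  have h0 : ∀ u v : ℝ, IntervalIntegrable (fun ρ : ℝ => (⌈ρ⌉ : ℝ)) volume u v := by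
    intro u v
    simpa using intervalIntegrable_ceil 0 u v
  have hid : ∀ u v : ℝ, IntervalIntegrable (fun ρ : ℝ => ρ) volume u v :=
    fun u v => continuous_id.intervalIntegrable u v
  rw [intervalIntegral.integral_sub (h0 _ _) (hid _ _),
    intervalIntegral.integral_sub (h0 _ _) (hid _ _), integral_id, integral_id] at h
  rw [intervalIntegral.integral_comp_add_left (fun y : ℝ => (⌈y⌉ : ℝ)) a, add_zero]
  rw [zero_add] at h
  linarith

lemma integral_ceil_sub (a b : ℝ) :
    ∫ ρ in (0 : ℝ)..1, ((⌈a + ρ⌉ : ℝ) - (⌈b + ρ⌉ : ℝ)) = a - b := by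
  rw [intervalIntegral.integral_sub (intervalIntegrable_ceil a 0 1)
    (intervalIntegrable_ceil b 0 1), integral_ceil a, integral_ceil b]
  ring

lemma integral_abs_ceil_sub (a b : ℝ) :
    ∫ ρ in (0 : ℝ)..1, |(⌈a + ρ⌉ : ℝ) - (⌈b + ρ⌉ : ℝ)| = |a - b| := by
  wlog hab : b ≤ a generalizing a b
  · rw [abs_sub_comm a b, ← this b a (le_of_not_ge hab)]
    simp only [abs_sub_comm]
  · rw [abs_of_nonneg (sub_nonneg.2 hab), ← integral_ceil_sub a b]
    congr 1
    ext ρ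
    have h : ⌈b + ρ⌉ ≤ ⌈a + ρ⌉ := Int.ceil_mono (by linarith)
    exact abs_of_nonneg (sub_nonneg.2 (by exact_mod_cast h))

lemma sum_abs_sum_le {E I : Type} [Fintype E] [Fintype I] (S : I → Finset E)
    (hdisj : ∀ i j : I, i ≠ j → Disjoint (S i) (S j)) (d : E → ℝ) :
    ∑ i : I, |∑ e ∈ S i, d e| ≤ ∑ e : E, |d e| := by
  classical
  calc ∑ i : I, |∑ e ∈ S i, d e| ≤ ∑ i : I, ∑ e ∈ S i, |d e| :=
        Finset.sum_le_sum fun i _ => Finset.abs_sum_le_sum_abs _ _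
    _ = ∑ e ∈ Finset.univ.biUnion S, |d e| :=
        (Finset.sum_biUnion fun i _ j _ hij => hdisj i j hij).symm
    _ ≤ ∑ e : E, |d e| :=
        Finset.sum_le_sum_of_subset_of_nonneg (Finset.subset_univ _) fun _ _ _ => abs_nonneg _

/-- Let `E` be a finite set, `(S i)_{i ∈ I}` a finite family of pairwise disjoint subsets
of `E`, and `x⁽⁰⁾, …, x⁽ᵀ⁾ ∈ ℝ^E`.  With `f t i = ∑_{e ∈ S i} x t e` and
`b t i ρ = ⌈2 f t i + ρ⌉`, for `ρ` uniform on `[0,1)`,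
`E_ρ[∑_{t=1}^T ∑_i |b t i ρ − b (t-1) i ρ|] ≤ 2 ∑_{t=1}^T ∑_e |x t e − x (t-1) e|`. -/
theorem stmt1 {E I : Type} [Fintype E] [Fintype I] (S : I → Finset E)
    (hdisj : ∀ i j : I, i ≠ j → Disjoint (S i) (S j))
    (T : ℕ) (x : ℕ → E → ℝ) :
    (∫ ρ in Set.Ico (0 : ℝ) 1,
        ∑ t ∈ Finset.Icc 1 T, ∑ i : I,
          |(⌈2 * (∑ e ∈ S i, x t e) + ρ⌉ : ℝ) - (⌈2 * (∑ e ∈ S i, x (t - 1) e) + ρ⌉ : ℝ)|)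
      ≤ 2 * ∑ t ∈ Finset.Icc 1 T, ∑ e : E, |x t e - x (t - 1) e| := by
  have hint : ∀ a b : ℝ, IntervalIntegrable
      (fun ρ : ℝ => |(⌈a + ρ⌉ : ℝ) - (⌈b + ρ⌉ : ℝ)|) volume 0 1 := fun a b =>
    ((intervalIntegrable_ceil a 0 1).sub (intervalIntegrable_ceil b 0 1)).abs
  have hsum : ∀ t : ℕ, IntervalIntegrable (fun ρ : ℝ => ∑ i : I,
      |(⌈2 * (∑ e ∈ S i, x t e) + ρ⌉ : ℝ) - (⌈2 * (∑ e ∈ S i, x (t - 1) e) + ρ⌉ : ℝ)|)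
      volume 0 1 := by
    intro t
    simpa only [Finset.sum_fn] using IntervalIntegrable.sum Finset.univ fun i _ =>
      hint (2 * ∑ e ∈ S i, x t e) (2 * ∑ e ∈ S i, x (t - 1) e)
  rw [integral_Ico_eq_integral_Ioc, ← intervalIntegral.integral_of_le zero_le_one,
    intervalIntegral.integral_finsetSum fun t _ => hsum t, Finset.mul_sum]
  refine Finset.sum_le_sum fun t _ => ?_
  rw [intervalIntegral.integral_finsetSum fun i _ => hint _ _]
  simp only [integral_abs_ceil_sub, ← mul_sub, ← Finset.sum_sub_distrib, abs_mul, abs_two,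
    ← Finset.mul_sum]
  exact mul_le_mul_of_nonneg_left (sum_abs_sum_le S hdisj fun e => x t e - x (t - 1) e) zero_le_two
end

section
/- Let H = (L ⊎ R, E_H) be a finite bipartite graph and let α > 1 be a real number such that |N_H(A)| ≥ α|A| for every A ⊆ L. Let F ⊆ E_H be a matching in which some vertex of L is unmatched, and let D = ⌊log_α |L|⌋ + 1. Then there exists an F-augmenting path of length at most 2D + 1. -/
/-!
Grow the alternating layers from the unmatched vertex `u₀`: `altReach n` is the set of vertices of
`L` reachable from `u₀` by at most `n` steps "non-matching edge to `R`, matching edge back to `L`".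
If every vertex of `N(altReach n)` is matched, then sending it to its partner embeds
`N(altReach n)` into `altReach (n + 1)`, so expansion gives
`|altReach (n + 1)| ≥ α |altReach n|` (`altReach_growth`). As `α ^ D > |L|`, this growth cannot
persist for `D` steps, so some `altReach n` with `n < D` has a neighbour unmatched by `F`.

To get a path rather than a walk, `exists_layered_walk` reaches a vertex of exact layer `k` by a
walk whose `i`-th vertex has exact layer `i`. Its `L`-vertices are then distinct, and the matching
property transfers this to the `R`-vertices and shows that the forward edges are not in `F`.
-/

/-- The vertices of `L` reachable from `u₀` by at most `n` double steps, each consisting of an edge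
of the graph from `L` to `R` followed by an edge of `F` back to `L`. The forward edge may lie in
`F`; such a double step stays in place when `F` is a matching. -/
def altReach {L R : Type} (adj : L → R → Prop) (F : Set (L × R)) (u₀ : L) : ℕ → Set L
  | 0 => {u₀}
  | n + 1 => altReach adj F u₀ n ∪
      {y | ∃ x ∈ altReach adj F u₀ n, ∃ w, adj x w ∧ (y, w) ∈ F}

/-- If `k` is the least index with `x ∈ altReach k`, then `x` ends a walk of `k` double steps whose
`i`-th vertex has least index exactly `i`. -/
lemma exists_layered_walk {L R : Type} [Nonempty R] (adj : L → R → Prop) (F : Set (L × R))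
    (u₀ : L) (k : ℕ) : ∀ x ∈ altReach adj F u₀ k, (∀ m < k, x ∉ altReach adj F u₀ m) →
    ∃ (f : ℕ → L) (g : ℕ → R), f 0 = u₀ ∧ f k = x ∧
      (∀ i < k, adj (f i) (g i) ∧ (f (i + 1), g i) ∈ F) ∧
      (∀ i ≤ k, f i ∈ altReach adj F u₀ i ∧ ∀ m < i, f i ∉ altReach adj F u₀ m) := by
  induction k with
  | zero =>
    intro x hx _
    have hx' : x = u₀ := hx
    subst hx'
    refine ⟨fun _ => x, fun _ => Classical.arbitrary R, rfl, rfl, by simp, ?_⟩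
    intro i hi
    obtain rfl : i = 0 := by omega
    exact ⟨hx, by simp⟩
  | succ k ih =>
    intro x hx hmin
    rcases hx with hx | ⟨y, hy, w, hyw, hxw⟩
    · exact absurd hx (hmin k (by omega))
    -- If `y` were in an earlier layer, `x` would be too.
    have hymin : ∀ m < k, y ∉ altReach adj F u₀ m := fun m hm hym =>
      hmin (m + 1) (by omega) (Or.inr ⟨y, hym, w, hyw, hxw⟩)
    obtain ⟨f, g, h0, hk, hstep, hlay⟩ := ih y hy hymin
    refine ⟨fun i => if i ≤ k then f i else x, fun i => if i < k then g i else w,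
      by simp [h0], by simp, ?_, ?_⟩
    · intro i hi
      by_cases hik : i < k
      · simpa [hik, hik.le, Nat.succ_le_of_lt hik] using hstep i hik
      · obtain rfl : i = k := by omega
        simpa [hk] using ⟨hyw, hxw⟩
    · intro i hi
      by_cases hik : i ≤ k
      · simpa [hik] using hlay i hik
      · obtain rfl : i = k + 1 := by omega
        simp only [hik, if_false]
        exact ⟨Or.inr ⟨y, hy, w, hyw, hxw⟩, hmin⟩

lemma altReach_growth {L R : Type} [Fintype L] [Fintype R] (adj : L → R → Prop)
    (α : ℝ)
    (hexp : ∀ A : Set L, α * A.ncard ≤ ({v : R | ∃ u ∈ A, adj u v}.ncard : ℝ))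
    (F : Set (L × R))
    (hFmatching : ∀ p ∈ F, ∀ q ∈ F, (p.1 = q.1 ↔ p.2 = q.2)) (u₀ : L) (n : ℕ)
    (hN : ∀ x ∈ altReach adj F u₀ n, ∀ w, adj x w → ∃ y, (y, w) ∈ F) :
    α * (altReach adj F u₀ n).ncard ≤ ((altReach adj F u₀ (n + 1)).ncard : ℝ) := by
  refine (hexp _).trans ?_
  have hN' : ∀ w : R, ∃ y : L, (∃ x ∈ altReach adj F u₀ n, adj x w) → (y, w) ∈ F := by
    intro w
    by_cases h : ∃ x ∈ altReach adj F u₀ n, adj x w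
    · obtain ⟨x, hx, hxw⟩ := h
      obtain ⟨y, hy⟩ := hN x hx w hxw
      exact ⟨y, fun _ => hy⟩
    · exact ⟨u₀, fun h' => absurd h' h⟩
  choose p hp using hN'
  exact_mod_cast Set.ncard_le_ncard_of_injOn p
    (fun w hw => by
      obtain ⟨x, hx, hxw⟩ := hw
      exact Or.inr ⟨x, hx, w, hxw, hp w ⟨x, hx, hxw⟩⟩)
    (fun w hw w' hw' h => (hFmatching _ (hp w hw) _ (hp w' hw')).1 h)
    (Set.toFinite _)


/-- Let `H = (L ⊎ R, E_H)` be a finite bipartite graph (given by the adjacency relation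
`adj`) and `α > 1` a real such that `|N_H(A)| ≥ α |A|` for every `A ⊆ L`.  Let `F` be a
matching in `H` in which some vertex `u₀ ∈ L` is unmatched, and `D = ⌊log_α |L|⌋ + 1`.
Then there is an `F`-augmenting path `u 0, v 0, u 1, v 1, …, u k, v k` of length
`2k + 1 ≤ 2D + 1`. -/
theorem stmt2 {L R : Type} [Fintype L] [Fintype R] (adj : L → R → Prop)
    (α : ℝ) (hα : 1 < α)
    (hexp : ∀ A : Set L, α * A.ncard ≤ ({v : R | ∃ u ∈ A, adj u v}.ncard : ℝ))
    (F : Set (L × R))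
    (hFedges : ∀ p ∈ F, adj p.1 p.2)
    (hFmatching : ∀ p ∈ F, ∀ q ∈ F, (p.1 = q.1 ↔ p.2 = q.2))
    (u₀ : L) (hu₀ : ∀ v : R, (u₀, v) ∉ F) :
    ∃ (k : ℕ) (u : Fin (k + 1) → L) (v : Fin (k + 1) → R),
      Function.Injective u ∧ Function.Injective v ∧
      (∀ w : R, (u 0, w) ∉ F) ∧ (∀ w : L, (w, v (Fin.last k)) ∉ F) ∧
      (∀ i : Fin (k + 1), adj (u i) (v i) ∧ (u i, v i) ∉ F) ∧
      (∀ i : Fin k, (u i.succ, v i.castSucc) ∈ F) ∧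
      (k : ℤ) ≤ ⌊Real.logb α (Fintype.card L)⌋ + 1 := by
  classical
  have hLpos : 0 < Fintype.card L := Fintype.card_pos_iff.2 ⟨u₀⟩
  have hlog : 0 ≤ Real.logb α (Fintype.card L) :=
    Real.logb_nonneg hα (by exact_mod_cast hLpos)
  obtain ⟨D, hD⟩ : ∃ D : ℕ, (D : ℤ) = ⌊Real.logb α (Fintype.card L)⌋ + 1 :=
    ⟨(⌊Real.logb α (Fintype.card L)⌋ + 1).toNat,
      Int.toNat_of_nonneg (by have := Int.floor_nonneg.2 hlog; omega)⟩
  have hDpow : (Fintype.card L : ℝ) < α ^ D := by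
    have h1 : Real.logb α (Fintype.card L) < (D : ℝ) := by
      have h2 : ((D : ℤ) : ℝ) = (⌊Real.logb α (Fintype.card L)⌋ : ℝ) + 1 := by
        rw [hD]; push_cast; rfl
      have h3 := Int.lt_floor_add_one (Real.logb α (Fintype.card L))
      rw [← h2] at h3
      exact_mod_cast h3
    rw [Real.logb_lt_iff_lt_rpow hα (by exact_mod_cast hLpos)] at h1
    simpa using h1
  have hex : ∃ n < D, ∃ x ∈ altReach adj F u₀ n, ∃ w, adj x w ∧ ∀ y, (y, w) ∉ F := by
    by_contra! hcon
    have hgrow : ∀ n ≤ D, α ^ n ≤ ((altReach adj F u₀ n).ncard : ℝ) := by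
      intro n
      induction n with
      | zero => simp [altReach]
      | succ n ih =>
        intro hn
        calc α ^ (n + 1) = α * α ^ n := pow_succ' α n
          _ ≤ α * (altReach adj F u₀ n).ncard :=
            mul_le_mul_of_nonneg_left (ih (by omega)) (by linarith)
          _ ≤ _ := altReach_growth adj α hexp F hFmatching u₀ n (hcon n (by omega))
    have hle : (altReach adj F u₀ D).ncard ≤ Fintype.card L := by
      rw [← Nat.card_eq_fintype_card]
      exact Set.ncard_le_card _
    have hle' : ((altReach adj F u₀ D).ncard : ℝ) ≤ Fintype.card L := by exact_mod_cast hle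
    linarith [hgrow D le_rfl]
  obtain ⟨n, hn, x, hx, w, hxw, hw⟩ := hex
  have hx' : ∃ m, x ∈ altReach adj F u₀ m := ⟨n, hx⟩
  obtain ⟨k, hk, hkn, hkmin⟩ : ∃ k, x ∈ altReach adj F u₀ k ∧ k ≤ n ∧
      ∀ m < k, x ∉ altReach adj F u₀ m :=
    ⟨Nat.find hx', Nat.find_spec hx', Nat.find_min' hx' hx, fun m hm => Nat.find_min hx' hm⟩
  haveI : Nonempty R := ⟨w⟩
  obtain ⟨f, g, hf0, hfk, hstep, hlay⟩ := exists_layered_walk adj F u₀ k x hk hkmin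
  have hfinj : ∀ i ≤ k, ∀ j ≤ k, f i = f j → i = j := by
    intro i hi j hj hij
    rcases lt_trichotomy i j with h | h | h
    · exact absurd (hij ▸ (hlay i hi).1) ((hlay j hj).2 i h)
    · exact h
    · exact absurd (hij ▸ (hlay j hj).1) ((hlay i hi).2 j h)
  refine ⟨k, fun i => f i, fun i => if (i : ℕ) < k then g i else w, ?_, ?_, ?_, ?_, ?_, ?_, ?_⟩
  · intro i j hij
    exact Fin.ext (hfinj i (by omega) j (by omega) hij)
  · intro i j hij
    apply Fin.ext
    by_cases hi : (i : ℕ) < k <;> by_cases hj : (j : ℕ) < k <;> simp only [hi, hj, if_true, if_false] at hij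
    · have := hfinj (i + 1) (by omega) (j + 1) (by omega)
        ((hFmatching _ (hstep i hi).2 _ (hstep j hj).2).2 hij)
      omega
    · exact absurd (hij ▸ (hstep i hi).2) (hw _)
    · exact absurd (hij ▸ (hstep j hj).2) (hw _)
    · omega
  · simpa [hf0] using hu₀
  · simpa using hw
  · intro i
    by_cases hi : (i : ℕ) < k
    · simp only [hi, if_true]
      refine ⟨(hstep i hi).1, fun hF => ?_⟩
      have := hfinj i (by omega) (i + 1) (by omega)
        ((hFmatching _ hF _ (hstep i hi).2).2 rfl)
      omega
    · have hik : (i : ℕ) = k := by omega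
      simp only [hik, lt_irrefl, if_false, hfk]
      exact ⟨hxw, hw x⟩
  · intro i
    simpa using (hstep i i.2).2
  · omega
end

section
/- Let (G = (V, E), τ, μ, c, γ) be a generalized network flow instance, let S ⊆ V \ {τ}, and let a be the supplies with a_s = 1 for s ∈ S and a_v = 0 for v ∈ V \ S \ {τ}. Let ε > 0. Suppose x is a feasible flow with supplies a such that x_e ∈ {0, μ_e} for every e ∈ E, and suppose y : V → ℝ_{≥0} satisfies y_τ = 0, y_u ≤ γ_{uv} y_v + c_{uv} for every uv ∈ E with x_{uv} = 0, and γ_{uv} y_v ≤ y_u for every uv ∈ E with x_{uv} = μ_{uv}. Then for every x̂ ∈ ℝ^E with 0 ≤ x̂_e ≤ μ_e/(1+ε) for all e ∈ E whose excess at each v ∈ V \ {τ} equals a_v, one has Σ_{s ∈ S} y_s ≤ ((1+ε)/ε) · Σ_{e ∈ E} c_e x̂_e. -/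
/-!
Write `d e = y e.1 - γ e * y e.2` for the reduced potential of an edge. Pairing the balance
equations with `y` (`sum_potential_eq`) gives `∑ e, f e * d e = ∑ s ∈ S, y s` for every flow `f`
with the given supplies, so `z = (1 + ε) xh - x` satisfies `∑ e, z e * d e = ε * ∑ s ∈ S, y s`.
Each edge contributes at most `(1 + ε) * (c e * xh e)` to this sum: if `x e = 0` then `z e ≥ 0` and
`d e ≤ c e`, and if `x e = μ e` then `z e ≤ 0 ≤ d e`. Dividing by `ε` yields the bound.
-/

/-- Summation by parts: the total potential of the sources equals the potential drop along the
flow. The sink needs no balance equation because `y τ = 0`. -/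
lemma sum_potential_eq {V : Type} [Fintype V] [DecidableEq V]
    (E : Finset (V × V)) (τ : V) (γ : V × V → ℝ) (S : Finset V)
    (y : V → ℝ) (hyτ : y τ = 0) (f : V × V → ℝ)
    (hbal : ∀ v : V, v ≠ τ →
      (∑ e ∈ E.filter (fun e => e.1 = v), f e)
        - (∑ e ∈ E.filter (fun e => e.2 = v), γ e * f e)
        = if v ∈ S then 1 else 0) :
    ∑ s ∈ S, y s = ∑ e ∈ E, f e * (y e.1 - γ e * y e.2) := by
  have hpair : ∀ v, y v * ((∑ e ∈ E.filter (fun e => e.1 = v), f e)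
      - (∑ e ∈ E.filter (fun e => e.2 = v), γ e * f e)) = if v ∈ S then y v else 0 := by
    intro v
    by_cases hv : v = τ
    · subst hv
      simp [hyτ]
    · rw [hbal v hv]
      simp
  have hS : ∑ s ∈ S, y s = ∑ v, if v ∈ S then y v else 0 := by simp
  have hout : ∑ v, y v * ∑ e ∈ E.filter (fun e => e.1 = v), f e = ∑ e ∈ E, y e.1 * f e := by
    rw [← Finset.sum_fiberwise E (fun e => e.1) (fun e => y e.1 * f e)]
    refine Finset.sum_congr rfl fun v _ => ?_
    rw [Finset.mul_sum]
    refine Finset.sum_congr rfl fun e he => ?_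
    rw [(Finset.mem_filter.mp he).2]
  have hin : ∑ v, y v * ∑ e ∈ E.filter (fun e => e.2 = v), γ e * f e
      = ∑ e ∈ E, y e.2 * (γ e * f e) := by
    rw [← Finset.sum_fiberwise E (fun e => e.2) (fun e => y e.2 * (γ e * f e))]
    refine Finset.sum_congr rfl fun v _ => ?_
    rw [Finset.mul_sum]
    refine Finset.sum_congr rfl fun e he => ?_
    rw [(Finset.mem_filter.mp he).2]
  rw [hS, ← Finset.sum_congr rfl fun v _ => hpair v]
  simp only [mul_sub]
  rw [Finset.sum_sub_distrib, hout, hin, ← Finset.sum_sub_distrib]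
  exact Finset.sum_congr rfl fun e _ => by ring

/-- Let `(G = (V,E), τ, μ, c, γ)` be a generalized network flow instance, `S ⊆ V \ {τ}`,
and `a` the supplies with `a s = 1` for `s ∈ S` and `a v = 0` otherwise.  Let `ε > 0`.
Suppose `x` is a feasible flow with supplies `a` such that `x e ∈ {0, μ e}` for every
`e ∈ E`, and `y : V → ℝ≥0` satisfies `y τ = 0`, `y u ≤ γ uv ⬝ y v + c uv` whenever
`x uv = 0`, and `γ uv ⬝ y v ≤ y u` whenever `x uv = μ uv`.  Then for every `xh` with
`0 ≤ xh e ≤ μ e / (1+ε)` whose excess at each `v ≠ τ` equals `a v`, one has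
`∑_{s ∈ S} y s ≤ ((1+ε)/ε) ∑_{e ∈ E} c e ⬝ xh e`. -/
theorem stmt7 {V : Type} [Fintype V] [DecidableEq V]
    (E : Finset (V × V)) (τ : V) (μ c γ : V × V → ℝ)
    (hμ : ∀ e ∈ E, 0 < μ e) (hc : ∀ e ∈ E, 0 ≤ c e) (hγ : ∀ e ∈ E, 0 < γ e)
    (hap : ∀ e ∈ E, (e.2, e.1) ∉ E)
    (S : Finset V) (hSτ : τ ∉ S) (ε : ℝ) (hε : 0 < ε)
    (x : V × V → ℝ)
    (hxfeas : ∀ e ∈ E, 0 ≤ x e ∧ x e ≤ μ e)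
    (hxbal : ∀ v : V, v ≠ τ →
      (∑ e ∈ E.filter (fun e => e.1 = v), x e)
        - (∑ e ∈ E.filter (fun e => e.2 = v), γ e * x e)
        = if v ∈ S then 1 else 0)
    (hx01 : ∀ e ∈ E, x e = 0 ∨ x e = μ e)
    (y : V → ℝ) (hy0 : ∀ v, 0 ≤ y v) (hyτ : y τ = 0)
    (hy1 : ∀ e ∈ E, x e = 0 → y e.1 ≤ γ e * y e.2 + c e)
    (hy2 : ∀ e ∈ E, x e = μ e → γ e * y e.2 ≤ y e.1)
    (xh : V × V → ℝ)
    (hxhfeas : ∀ e ∈ E, 0 ≤ xh e ∧ xh e ≤ μ e / (1 + ε))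
    (hxhbal : ∀ v : V, v ≠ τ →
      (∑ e ∈ E.filter (fun e => e.1 = v), xh e)
        - (∑ e ∈ E.filter (fun e => e.2 = v), γ e * xh e)
        = if v ∈ S then 1 else 0) :
    ∑ s ∈ S, y s ≤ ((1 + ε) / ε) * ∑ e ∈ E, c e * xh e := by
  have hx := sum_potential_eq E τ γ S y hyτ x hxbal
  have hxh := sum_potential_eq E τ γ S y hyτ xh hxhbal
  have hε1 : 0 < 1 + ε := by linarith
  have key : ∑ e ∈ E, ((1 + ε) * xh e - x e) * (y e.1 - γ e * y e.2)
      ≤ ∑ e ∈ E, (1 + ε) * (c e * xh e) := by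
    refine Finset.sum_le_sum fun e he => ?_
    obtain ⟨h0, hle⟩ := hxhfeas e he
    have hcx : 0 ≤ (1 + ε) * (c e * xh e) := mul_nonneg hε1.le (mul_nonneg (hc e he) h0)
    rcases hx01 e he with h | h
    · have hd : y e.1 - γ e * y e.2 ≤ c e := by linarith [hy1 e he h]
      have hm := mul_le_mul_of_nonneg_left hd (mul_nonneg hε1.le h0)
      rw [h]
      linarith
    · have hz : (1 + ε) * xh e - x e ≤ 0 := by
        rw [le_div_iff₀ hε1] at hle
        linarith
      exact (mul_nonpos_of_nonpos_of_nonneg hz (sub_nonneg.mpr (hy2 e he h))).trans hcx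
  have hz : ∑ e ∈ E, ((1 + ε) * xh e - x e) * (y e.1 - γ e * y e.2) = ε * ∑ s ∈ S, y s := by
    have hsplit : ε * ∑ s ∈ S, y s = (1 + ε) * ∑ s ∈ S, y s - ∑ s ∈ S, y s := by ring
    rw [hsplit]
    nth_rewrite 1 [hxh]
    rw [hx, Finset.mul_sum, ← Finset.sum_sub_distrib]
    exact Finset.sum_congr rfl fun e _ => by ring
  rw [hz, ← Finset.mul_sum] at key
  rw [div_mul_eq_mul_div, le_div_iff₀ hε]
  linarith
end

section
/- Let (G = (V, E), τ, μ, c, γ) be a generalized network flow instance, let x ∈ ℝ^E satisfy 0 ≤ x_e ≤ μ_e for every e ∈ E, let f be a fractional augmenting path from s ∈ V \ {τ} in G^x, let θ > 0, and let x' be obtained by augmenting x by θ units using f. Then for every v ∈ V \ {s, τ}, the excess of x' at v (computed in G with gains γ) equals the excess of x at v, and the excess of x' at s equals the excess of x at s plus θ. -/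
/-!
The excess is affine in the flow, and augmenting along `f` changes it at each vertex `v` by `θ`
times the residual excess of `f` at `v` (`excess_augmentFlow`). This is checked separately for
each neighbour `u`: a backward residual edge has reciprocal gain, so sending `f (u, v)` along the
reversal of an edge `vu` lowers the outflow of `v` by `f (u, v) / γ (v, u)`, which is exactly its
contribution to the residual inflow of `v`; likewise with the roles exchanged. Since there are no
anti-parallel edges, at most one of `uv`, `vu` is an edge. The residual excess is `1` at `s` and
`0` away from `s` and `τ`.
-/

variable {V : Type}

/-- The residual graph `G^x`: `(u,v)` is a residual edge iff it is a forward edge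
(`uv ∈ E` with `x uv < μ uv`) or a backward edge (`vu ∈ E` with `x vu > 0`). -/
def ResEdge (E : Finset (V × V)) (μ x : V × V → ℝ) (u v : V) : Prop :=
  ((u, v) ∈ E ∧ x (u, v) < μ (u, v)) ∨ ((v, u) ∈ E ∧ 0 < x (v, u))

/-- The cost of a residual edge: `c uv` on forward edges, `0` on backward edges. -/
noncomputable def resCost [DecidableEq V] (E : Finset (V × V)) (c : V × V → ℝ) (u v : V) : ℝ :=
  if (u, v) ∈ E then c (u, v) else 0

/-- The gain of a residual edge: `γ uv` on forward edges, `1 / γ vu` on backward edges. -/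
noncomputable def resGain [DecidableEq V] (E : Finset (V × V)) (γ : V × V → ℝ) (u v : V) : ℝ :=
  if (u, v) ∈ E then γ (u, v) else 1 / γ (v, u)

/-- The excess of `f : ℝ^{E^x}` at a vertex `w`, computed in the residual graph `G^x`:
`∑_{e ∈ δ⁺(w)} f e − ∑_{e ∈ δ⁻(w)} γ^x e ⬝ f e` (for `f` vanishing outside `E^x`). -/
noncomputable def resExcess [Fintype V] [DecidableEq V] (E : Finset (V × V)) (γ : V × V → ℝ)
    (f : V × V → ℝ) (w : V) : ℝ :=
  (∑ v : V, f (w, v)) - ∑ u : V, resGain E γ u w * f (u, w)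

/-- `f` is a fractional augmenting path from `s` in the residual graph `G^x`:
`f ≥ 0` is supported on residual edges, and its residual excess is `1` at `s` and `0` at
every vertex other than `s` and `τ`. -/
def IsFracAug [Fintype V] [DecidableEq V] (E : Finset (V × V)) (μ γ x : V × V → ℝ) (τ s : V)
    (f : V × V → ℝ) : Prop :=
  (∀ p, 0 ≤ f p) ∧ (∀ u v : V, ¬ ResEdge E μ x u v → f (u, v) = 0) ∧
  resExcess E γ f s = 1 ∧ ∀ w : V, w ≠ s → w ≠ τ → resExcess E γ f w = 0

/-- The cost of a fractional augmenting path: `∑_{e ∈ E^x} c^x e ⬝ f e`. -/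
noncomputable def augCost [Fintype V] [DecidableEq V] (E : Finset (V × V)) (c : V × V → ℝ)
    (f : V × V → ℝ) : ℝ :=
  ∑ p : V × V, resCost E c p.1 p.2 * f p

/-- `S` is the edge set of a simple directed path from `a` to `b` in the graph with
adjacency relation `Radj`. -/
def IsPathSupport (Radj : V → V → Prop) (a b : V) (S : Set (V × V)) : Prop :=
  ∃ (n : ℕ) (w : Fin (n + 1) → V), Function.Injective w ∧ w 0 = a ∧ w (Fin.last n) = b ∧
    (∀ i : Fin n, Radj (w i.castSucc) (w i.succ)) ∧
    S = {p | ∃ i : Fin n, p = (w i.castSucc, w i.succ)}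

/-- `S` is the edge set of an augmenting path from `s` (avoiding resp. reaching `τ`):
(a) a simple directed path from `s` to `τ`; or (b) a simple directed cycle containing `s`
but not `τ`; or (c) the union of a simple directed cycle containing neither `s` nor `τ`
and a simple directed path from `s` to the cycle, internally disjoint from the cycle. -/
def IsAugSupport (Radj : V → V → Prop) (τ s : V) (S : Set (V × V)) : Prop :=
  IsPathSupport Radj s τ S ∨
  (∃ (n : ℕ) (w : Fin (n + 2) → V), Function.Injective w ∧
    (∃ i, w i = s) ∧ (∀ i, w i ≠ τ) ∧
    (∀ i : Fin (n + 2), Radj (w i) (w (i + 1))) ∧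
    S = {p | ∃ i : Fin (n + 2), p = (w i, w (i + 1))}) ∨
  (∃ (n m : ℕ) (w : Fin (n + 2) → V) (u : Fin (m + 2) → V),
    Function.Injective w ∧ Function.Injective u ∧
    (∀ i, w i ≠ s) ∧ (∀ i, w i ≠ τ) ∧
    (∀ i : Fin (n + 2), Radj (w i) (w (i + 1))) ∧
    u 0 = s ∧ u (Fin.last (m + 1)) = w 0 ∧
    (∀ i : Fin (m + 1), Radj (u i.castSucc) (u i.succ)) ∧
    (∀ i : Fin (m + 1), u i.castSucc ∉ Set.range w) ∧
    S = {p | ∃ i : Fin (n + 2), p = (w i, w (i + 1))} ∪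
        {p | ∃ i : Fin (m + 1), p = (u i.castSucc, u i.succ)})

/-- The excess of `x` at `v` in the original graph `G`:
`∑_{e ∈ δ⁺(v)} x e − ∑_{e ∈ δ⁻(v)} γ e ⬝ x e`. -/
noncomputable def excess [Fintype V] [DecidableEq V] (E : Finset (V × V))
    (γ x : V × V → ℝ) (v : V) : ℝ :=
  (∑ e ∈ E.filter (fun e => e.1 = v), x e) - ∑ e ∈ E.filter (fun e => e.2 = v), γ e * x e

/-- Augmenting `x` by `θ` units using `f`: each edge `uv ∈ E` gains `θ ⬝ f uv` from the
forward residual edge `uv` and loses `θ ⬝ f vu / γ uv` from the backward residual edge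
`vu`. -/
noncomputable def augmentFlow [DecidableEq V] (E : Finset (V × V)) (γ x f : V × V → ℝ)
    (θ : ℝ) : V × V → ℝ :=
  fun p => if p ∈ E then x p + θ * f p - θ * f (p.2, p.1) / γ p else x p

/-- Rewrites the excess as one sum over the potential neighbours `u` of `v`, so that it can be
compared term by term with `resExcess`. -/
lemma excess_eq_sum [Fintype V] [DecidableEq V] (E : Finset (V × V)) (γ x : V × V → ℝ) (v : V) :
    excess E γ x v = ∑ u : V, ((if (v, u) ∈ E then x (v, u) else 0) -
      (if (u, v) ∈ E then γ (u, v) * x (u, v) else 0)) := by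
  have h1 : ∑ e ∈ E.filter (fun e => e.1 = v), x e
      = ∑ u : V, (if (v, u) ∈ E then x (v, u) else 0) := by
    rw [← Finset.sum_filter]
    refine Finset.sum_bij' (fun e _ => e.2) (fun u _ => (v, u)) ?_ ?_ ?_ ?_ ?_ <;>
      simp +contextual
    all_goals rintro a b h rfl; exact h
  have h2 : ∑ e ∈ E.filter (fun e => e.2 = v), γ e * x e
      = ∑ u : V, (if (u, v) ∈ E then γ (u, v) * x (u, v) else 0) := by
    rw [← Finset.sum_filter]
    refine Finset.sum_bij' (fun e _ => e.1) (fun u _ => (u, v)) ?_ ?_ ?_ ?_ ?_ <;>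
      simp +contextual
    all_goals rintro a b h rfl; exact h
  rw [excess, h1, h2, Finset.sum_sub_distrib]

/-- Augmenting by `θ` units along any `f` supported on residual edges shifts the excess at every
vertex by `θ` times the residual excess of `f`. -/
lemma excess_augmentFlow [Fintype V] [DecidableEq V] (E : Finset (V × V)) (μ γ x f : V × V → ℝ)
    (hγ : ∀ e ∈ E, 0 < γ e) (hap : ∀ e ∈ E, (e.2, e.1) ∉ E)
    (hf : ∀ u v : V, ¬ ResEdge E μ x u v → f (u, v) = 0) (θ : ℝ) (v : V) :
    excess E γ (augmentFlow E γ x f θ) v = excess E γ x v + θ * resExcess E γ f v := by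
  rw [excess_eq_sum, excess_eq_sum, resExcess, ← Finset.sum_sub_distrib, Finset.mul_sum,
    ← Finset.sum_add_distrib]
  refine Finset.sum_congr rfl fun u _ => ?_
  by_cases h1 : (v, u) ∈ E
  · have h2 : (u, v) ∉ E := hap _ h1
    simp only [augmentFlow, resGain, h1, h2, if_true, if_false]
    ring
  · by_cases h2 : (u, v) ∈ E
    · have hg : γ (u, v) ≠ 0 := (hγ _ h2).ne'
      simp only [augmentFlow, resGain, h1, h2, if_true, if_false]
      field_simp
      ring
    · -- Neither orientation is an edge of `G`, so neither is residual and `f` vanishes on both.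
      have hf1 : f (v, u) = 0 := hf _ _ (by simp [ResEdge, h1, h2])
      have hf2 : f (u, v) = 0 := hf _ _ (by simp [ResEdge, h1, h2])
      simp [h1, h2, hf1, hf2]

/-- Let `(G = (V,E), τ, μ, c, γ)` be a generalized network flow instance, `0 ≤ x ≤ μ`,
`f` a fractional augmenting path from `s ∈ V \ {τ}` in `G^x`, `θ > 0`, and `x'` obtained
by augmenting `x` by `θ` units using `f`.  Then the excess of `x'` (in `G`) equals the
excess of `x` at every `v ∈ V \ {s, τ}`, and exceeds it by `θ` at `s`. -/
theorem stmt10 [Fintype V] [DecidableEq V]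
    (E : Finset (V × V)) (τ : V) (μ c γ : V × V → ℝ)
    (hμ : ∀ e ∈ E, 0 < μ e) (hc : ∀ e ∈ E, 0 ≤ c e) (hγ : ∀ e ∈ E, 0 < γ e)
    (hap : ∀ e ∈ E, (e.2, e.1) ∉ E)
    (x : V × V → ℝ) (hx : ∀ e ∈ E, 0 ≤ x e ∧ x e ≤ μ e)
    (s : V) (hs : s ≠ τ)
    (f : V × V → ℝ) (hf : IsFracAug E μ γ x τ s f)
    (θ : ℝ) (hθ : 0 < θ) :
    (∀ v : V, v ≠ s → v ≠ τ →
        excess E γ (augmentFlow E γ x f θ) v = excess E γ x v) ∧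
      excess E γ (augmentFlow E γ x f θ) s = excess E γ x s + θ := by
  obtain ⟨-, hsupp, hone, hzero⟩ := hf
  have key := excess_augmentFlow E μ γ x f hγ hap hsupp θ
  refine ⟨fun v hvs hvτ => ?_, ?_⟩
  · rw [key, hzero v hvs hvτ, mul_zero, add_zero]
  · rw [key, hone, mul_one]
end

section
/- Let (G = (V, E), τ, μ, c, γ) be a generalized network flow instance, let x ∈ ℝ^E satisfy 0 ≤ x_e ≤ μ_e for every e ∈ E, and let s ∈ V \ {τ}. Let f be an augmenting path from s in G^x whose cost is minimum among all fractional augmenting paths from s in G^x, and let θ > 0 be such that the vector x̄ obtained by augmenting x by θ units using f satisfies 0 ≤ x̄_e ≤ μ_e for every e ∈ E. Then height_{x̄}(v) ≥ height_x(v) for every v ∈ V. -/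
/-!
The proof avoids potentials and infinite heights. Let `g` be a fractional augmenting path from `v`
in `G^x̄`. An edge of `G^x̄` that is missing from `G^x` is the reverse of an edge used by `f`, so for
`K` large, all such edges can be cancelled in `K f + g` against their reverses. Cancellation keeps
the excesses, because opposite residual edges have reciprocal gains, and it does not raise the
cost, because costs are nonnegative (`exists_cancel`). The result is a flow `h` in `G^x` with excess
`e_v + K e_s` off `τ` and cost at most `K cost(f) + cost(g)`.

A nonnegative flow can be split along its excesses (`exists_subflow`), so `h = p + q` where `p` is a
fractional augmenting path from `v` in `G^x` and `q / K` is one from `s`. Minimality of `f` gives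
`cost(q) ≥ K cost(f)`, hence `cost(p) ≤ cost(g)`.
-/

variable {V : Type}

open scoped ENNReal

/-- `height_x(v)`: the infimum of the costs of fractional augmenting paths from `v` in
the residual graph `G^x` (`⊤` if none exists), with `height_x(τ) = 0`. -/
noncomputable def height [Fintype V] [DecidableEq V] (E : Finset (V × V))
    (μ c γ x : V × V → ℝ) (τ v : V) : ℝ≥0∞ :=
  if v = τ then 0
  else sInf ((fun f => ENNReal.ofReal (augCost E c f)) '' {f | IsFracAug E μ γ x τ v f})

lemma resGain_pos [DecidableEq V] (E : Finset (V × V)) (μ γ x : V × V → ℝ)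
    (hγ : ∀ e ∈ E, 0 < γ e) {a b : V} (h : ResEdge E μ x a b) : 0 < resGain E γ a b := by
  unfold resGain
  split_ifs with hab
  · exact hγ _ hab
  · rcases h with h | h
    · exact absurd h.1 hab
    · exact one_div_pos.2 (hγ _ h.1)

lemma resGain_mul_swap [DecidableEq V] (E : Finset (V × V)) (μ γ x : V × V → ℝ)
    (hγ : ∀ e ∈ E, 0 < γ e) (hap : ∀ e ∈ E, (e.2, e.1) ∉ E) {a b : V} (h : ResEdge E μ x a b) :
    resGain E γ b a * resGain E γ a b = 1 := by
  unfold resGain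
  rcases h with h | h
  · have := hap _ h.1
    have := (hγ _ h.1).ne'
    simp_all
  · have := hap _ h.1
    have := (hγ _ h.1).ne'
    simp_all

lemma resEdge_ne (E : Finset (V × V)) (μ x : V × V → ℝ) (hap : ∀ e ∈ E, (e.2, e.1) ∉ E) {a b : V}
    (h : ResEdge E μ x a b) : a ≠ b := by
  rintro rfl
  rcases h with h | h <;> exact hap _ h.1 h.1

/-- Residual edges created by the augmentation are reverses of edges in the support of `f`. -/
lemma resEdge_augment [DecidableEq V] (E : Finset (V × V)) (μ γ x f : V × V → ℝ)
    (hγ : ∀ e ∈ E, 0 < γ e) (hf0 : ∀ p, 0 ≤ f p) (θ : ℝ) (hθ : 0 < θ) {a b : V}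
    (h : ResEdge E μ (augmentFlow E γ x f θ) a b) (hn : ¬ ResEdge E μ x a b) : 0 < f (b, a) := by
  refine lt_of_le_of_ne (hf0 _) fun hz => hn ?_
  rcases h with ⟨h1, h2⟩ | ⟨h1, h2⟩
  · refine Or.inl ⟨h1, ?_⟩
    have := mul_nonneg hθ.le (hf0 (a, b))
    simp [augmentFlow, h1, ← hz] at h2
    linarith
  · refine Or.inr ⟨h1, ?_⟩
    have := div_nonneg (mul_nonneg hθ.le (hf0 (a, b))) (hγ _ h1).le
    simp [augmentFlow, h1, ← hz] at h2
    linarith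

section Aux
variable [Fintype V] [DecidableEq V]

lemma resExcess_add (E : Finset (V × V)) (γ f g : V × V → ℝ) (w : V) :
    resExcess E γ (fun p => f p + g p) w = resExcess E γ f w + resExcess E γ g w := by
  simp only [resExcess, mul_add, Finset.sum_add_distrib]; ring

lemma resExcess_sub (E : Finset (V × V)) (γ f g : V × V → ℝ) (w : V) :
    resExcess E γ (fun p => f p - g p) w = resExcess E γ f w - resExcess E γ g w := by
  simp only [resExcess, mul_sub, Finset.sum_sub_distrib]; ring

lemma resExcess_smul (E : Finset (V × V)) (γ f : V × V → ℝ) (k : ℝ) (w : V) :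
    resExcess E γ (fun p => k * f p) w = k * resExcess E γ f w := by
  simp only [resExcess, mul_sub, Finset.mul_sum]
  congr 1
  exact Finset.sum_congr rfl fun _ _ => by ring

lemma resExcess_indicator (E : Finset (V × V)) (γ : V × V → ℝ) (a b : V) (w : V) :
    resExcess E γ (fun p => if p = (a, b) then 1 else 0) w
      = (if w = a then 1 else 0) - (if w = b then resGain E γ a b else 0) := by
  simp only [resExcess, Prod.mk.injEq]
  congr 1
  · by_cases h1 : w = a <;> simp [h1]
  · by_cases h2 : w = b <;> simp [h2]

lemma augCost_sub (E : Finset (V × V)) (c f g : V × V → ℝ) :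
    augCost E c (fun p => f p - g p) = augCost E c f - augCost E c g := by
  simp only [augCost, mul_sub, Finset.sum_sub_distrib]

lemma augCost_add (E : Finset (V × V)) (c f g : V × V → ℝ) :
    augCost E c (fun p => f p + g p) = augCost E c f + augCost E c g := by
  simp only [augCost, mul_add, Finset.sum_add_distrib]

lemma augCost_smul (E : Finset (V × V)) (c f : V × V → ℝ) (k : ℝ) :
    augCost E c (fun p => k * f p) = k * augCost E c f := by
  simp only [augCost, Finset.mul_sum]
  exact Finset.sum_congr rfl fun _ _ => by ring

lemma augCost_mono (E : Finset (V × V)) (c f g : V × V → ℝ) (hc : ∀ e ∈ E, 0 ≤ c e)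
    (h : ∀ p, f p ≤ g p) : augCost E c f ≤ augCost E c g := by
  refine Finset.sum_le_sum fun p _ => mul_le_mul_of_nonneg_left (h p) ?_
  unfold resCost
  split_ifs with hp
  · exact hc _ hp
  · exact le_rfl

lemma continuous_resExcess (E : Finset (V × V)) (γ : V × V → ℝ) (w : V) :
    Continuous fun f : V × V → ℝ => resExcess E γ f w := by
  unfold resExcess; fun_prop

/-- A flow whose excess dominates `t ≥ 0` off `τ` contains a subflow whose excess is exactly `t` off
`τ`: a subflow of least total value among those dominating `t` has no slack, since at a vertex with
slack some outgoing edge could be decreased. -/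
lemma exists_subflow (E : Finset (V × V)) (γ : V × V → ℝ) (τ : V) (h : V × V → ℝ)
    (h0 : ∀ p, 0 ≤ h p) (hgain : ∀ a b, h (a, b) ≠ 0 → 0 < resGain E γ a b ∧ a ≠ b)
    (t : V → ℝ) (ht0 : ∀ w, 0 ≤ t w) (ht : ∀ w, w ≠ τ → t w ≤ resExcess E γ h w) :
    ∃ p : V × V → ℝ, (∀ e, 0 ≤ p e ∧ p e ≤ h e) ∧ ∀ w, w ≠ τ → resExcess E γ p w = t w := by
  let S : Set (V × V → ℝ) := Set.Icc 0 h ∩ {p | ∀ w, w ≠ τ → t w ≤ resExcess E γ p w}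
  have hS : IsCompact S := by
    refine isCompact_Icc.inter_right ?_
    simp only [Set.ofPred_forall]
    exact isClosed_iInter fun w => isClosed_iInter fun _ =>
      isClosed_le continuous_const (continuous_resExcess E γ w)
  have hne : S.Nonempty := ⟨h, ⟨fun p => h0 p, le_rfl⟩, ht⟩
  obtain ⟨p, ⟨⟨hp0, hph⟩, hpt⟩, hpmin⟩ :=
    hS.exists_isMinOn hne (f := fun p => ∑ e, p e) (by fun_prop)
  refine ⟨p, fun e => ⟨hp0 e, hph e⟩, fun w hw => ?_⟩
  by_contra hcon
  have hlt : t w < resExcess E γ p w := lt_of_le_of_ne (hpt w hw) (Ne.symm hcon)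
  have hin : ∀ a b, 0 ≤ resGain E γ a b * p (a, b) := by
    intro a b
    by_cases hz : h (a, b) = 0
    · have : p (a, b) = 0 := le_antisymm (hz ▸ hph (a, b)) (hp0 (a, b))
      simp [this]
    · exact mul_nonneg (hgain a b hz).1.le (hp0 _)
  obtain ⟨u, hu⟩ : ∃ u, 0 < p (w, u) := by
    by_contra! hno
    have h1 : ∑ v, p (w, v) ≤ 0 := Finset.sum_nonpos fun v _ => hno v
    have h2 : 0 ≤ ∑ v, resGain E γ v w * p (v, w) := Finset.sum_nonneg fun v _ => hin v w
    have h3 := ht0 w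
    unfold resExcess at hlt
    linarith
  obtain ⟨hg, hwu⟩ := hgain w u (hu.trans_le (hph _)).ne'
  obtain ⟨ε, hε, hε1, hε2⟩ : ∃ ε > 0, ε ≤ p (w, u) ∧ ε ≤ resExcess E γ p w - t w :=
    ⟨min (p (w, u)) (resExcess E γ p w - t w), lt_min hu (sub_pos.2 hlt), min_le_left _ _,
      min_le_right _ _⟩
  have hmem : (fun e => p e - ε * (if e = (w, u) then 1 else 0)) ∈ S := by
    refine ⟨⟨fun e => ?_, fun e => ?_⟩, fun z hz => ?_⟩
    · by_cases he : e = (w, u)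
      · simpa [he] using hε1
      · simpa [he] using hp0 e
    · have := hph e
      by_cases he : e = (w, u)
      · subst he; simp; linarith
      · simpa [he] using this
    · rw [resExcess_sub E γ p (fun e => ε * (if e = (w, u) then 1 else 0)),
        resExcess_smul E γ (fun e => if e = (w, u) then 1 else 0), resExcess_indicator]
      have := hpt z hz
      by_cases h1 : z = w
      · subst h1; simp [hwu]; linarith
      · by_cases h2 : z = u
        · have := mul_pos hε hg
          subst h2; simp [h1]; linarith
        · simpa [h1, h2] using this
  have := hpmin hmem
  simp [Finset.sum_sub_distrib] at this
  linarith

open Classical in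
/-- For large `K`, the part of `K f + g` on edges outside `G^x` can be cancelled against reverse
edges, at no increase in cost. -/
lemma exists_cancel (E : Finset (V × V)) (μ c γ x f g : V × V → ℝ) (τ s v : V)
    (hc : ∀ e ∈ E, 0 ≤ c e) (hγ : ∀ e ∈ E, 0 < γ e) (hap : ∀ e ∈ E, (e.2, e.1) ∉ E)
    (hf : IsFracAug E μ γ x τ s f) (θ : ℝ) (hθ : 0 < θ)
    (hg : IsFracAug E μ γ (augmentFlow E γ x f θ) τ v g) :
    ∃ (K : ℝ) (h : V × V → ℝ), 0 < K ∧ (∀ p, 0 ≤ h p) ∧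
      (∀ a b, ¬ ResEdge E μ x a b → h (a, b) = 0) ∧
      (∀ w, resExcess E γ h w = K * resExcess E γ f w + resExcess E γ g w) ∧
      augCost E c h ≤ K * augCost E c f + augCost E c g := by
  obtain ⟨hf0, hfs, -, -⟩ := hf
  obtain ⟨hg0, hgs, -, -⟩ := hg
  -- `q` is the part of `g` outside `G^x`.
  let q : V × V → ℝ := fun p => if ResEdge E μ x p.1 p.2 then 0 else g p
  have hq : ∀ a b, q (a, b) ≠ 0 → ResEdge E μ (augmentFlow E γ x f θ) a b ∧
      ¬ ResEdge E μ x a b ∧ 0 < f (b, a) := by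
    intro a b hne
    have h1 : ¬ ResEdge E μ x a b := fun h => hne (by simp [q, h])
    have h2 : ResEdge E μ (augmentFlow E γ x f θ) a b := by
      by_contra h
      exact hne (by simp [q, hgs a b h])
    exact ⟨h2, h1, resEdge_augment E μ γ x f hγ hf0 θ hθ h2 h1⟩
  have hq0 : ∀ p, 0 ≤ q p := fun p => by
    simp only [q]; split_ifs; exacts [le_rfl, hg0 p]
  have hqg : ∀ p, q p ≤ g p := fun p => by
    simp only [q]; split_ifs; exacts [hg0 p, le_rfl]
  -- `r` is the amount cancelled on the reverse edges.
  let r : V × V → ℝ := fun p => resGain E γ p.2 p.1 * q (p.2, p.1)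
  have hr0 : ∀ p, 0 ≤ r p := by
    rintro ⟨a, b⟩
    by_cases hz : q (b, a) = 0
    · simp [r, hz]
    · exact mul_nonneg (resGain_pos E μ γ _ hγ (hq b a hz).1).le (hq0 _)
  let K : ℝ := 1 + ∑ p, r p / f p
  have hKs : ∀ p, 0 ≤ r p / f p := fun p => div_nonneg (hr0 p) (hf0 p)
  have hK : 0 < K := by
    have : 0 ≤ ∑ p, r p / f p := Finset.sum_nonneg fun p _ => hKs p
    simp only [K]; linarith
  have hKr : ∀ p, r p ≤ K * f p := by
    rintro ⟨a, b⟩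
    by_cases hz : q (b, a) = 0
    · simpa [r, hz] using mul_nonneg hK.le (hf0 (a, b))
    · have hfp := (hq b a hz).2.2
      have h1 : r (a, b) / f (a, b) ≤ ∑ p, r p / f p :=
        Finset.single_le_sum (f := fun p => r p / f p) (fun p _ => hKs p) (Finset.mem_univ _)
      rw [← div_le_iff₀ hfp]
      simp only [K]; linarith
  have hexc : ∀ w, resExcess E γ (fun p => q p + r p) w = 0 := by
    intro w
    simp only [resExcess, r]
    rw [← Finset.sum_sub_distrib]
    refine Finset.sum_eq_zero fun u _ => ?_
    have : resGain E γ u w * (resGain E γ w u * q (w, u)) = q (w, u) := by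
      by_cases hz : q (w, u) = 0
      · simp [hz]
      · rw [← mul_assoc, resGain_mul_swap E μ γ _ hγ hap (hq w u hz).1, one_mul]
    rw [mul_add, this]; ring
  refine ⟨K, fun p => (K * f p + g p) - (q p + r p), hK, fun p => ?_, fun a b hab => ?_,
    fun w => ?_, ?_⟩
  · have := hKr p
    have := hqg p
    linarith
  · have h1 : f (a, b) = 0 := hfs a b hab
    have h2 : q (a, b) = g (a, b) := by simp [q, hab]
    have h3 : q (b, a) = 0 := by
      by_contra hz
      exact (hq b a hz).2.2.ne' h1
    simp [r, h1, h2, h3]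
  · rw [resExcess_sub E γ (fun p => K * f p + g p) (fun p => q p + r p), hexc,
      resExcess_add E γ (fun p => K * f p) g, resExcess_smul, sub_zero]
  · rw [← augCost_smul, ← augCost_add]
    refine augCost_mono E c _ _ hc fun p => ?_
    have := hq0 p
    have := hr0 p
    linarith

end Aux

/-- Monotonicity of heights: if `f` is a minimum-cost augmenting path from `s` in `G^x`
and `x̄` is obtained from `x` by augmenting `θ > 0` units along `f` (staying within the
capacities), then `height_{x̄}(v) ≥ height_x(v)` for every vertex `v`. -/
theorem stmt11 [Fintype V] [DecidableEq V]
    (E : Finset (V × V)) (τ : V) (μ c γ : V × V → ℝ)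
    (hμ : ∀ e ∈ E, 0 < μ e) (hc : ∀ e ∈ E, 0 ≤ c e) (hγ : ∀ e ∈ E, 0 < γ e)
    (hap : ∀ e ∈ E, (e.2, e.1) ∉ E)
    (x : V × V → ℝ) (hx : ∀ e ∈ E, 0 ≤ x e ∧ x e ≤ μ e)
    (s : V) (hs : s ≠ τ)
    (f : V × V → ℝ) (hf : IsFracAug E μ γ x τ s f)
    (hfsupp : IsAugSupport (ResEdge E μ x) τ s {p | f p ≠ 0})
    (hmin : ∀ g, IsFracAug E μ γ x τ s g → augCost E c f ≤ augCost E c g)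
    (θ : ℝ) (hθ : 0 < θ)
    (hfeas : ∀ e ∈ E, 0 ≤ augmentFlow E γ x f θ e ∧ augmentFlow E γ x f θ e ≤ μ e) :
    ∀ v : V, height E μ c γ x τ v ≤ height E μ c γ (augmentFlow E γ x f θ) τ v := by
  intro v
  unfold height
  split_ifs with hv
  · exact le_rfl
  refine le_sInf ?_
  rintro _ ⟨g, hg, rfl⟩
  obtain ⟨K, h, hK, h0, hsupp, hexc, hcost⟩ :=
    exists_cancel E μ c γ x f g τ s v hc hγ hap hf θ hθ hg
  have hfe : ∀ w, w ≠ τ → resExcess E γ f w = if w = s then 1 else 0 := by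
    intro w hw
    split_ifs with h1
    · rw [h1]; exact hf.2.2.1
    · exact hf.2.2.2 w h1 hw
  have hge : ∀ w, w ≠ τ → resExcess E γ g w = if w = v then 1 else 0 := by
    intro w hw
    split_ifs with h1
    · rw [h1]; exact hg.2.2.1
    · exact hg.2.2.2 w h1 hw
  obtain ⟨p, hp, hpe⟩ := exists_subflow E γ τ h h0
    (fun a b hne => by
      have hr : ResEdge E μ x a b := by
        by_contra hr
        exact hne (hsupp a b hr)
      exact ⟨resGain_pos E μ γ x hγ hr, resEdge_ne E μ x hap hr⟩)
    (fun w => if w = v then 1 else 0) (fun w => by split_ifs <;> norm_num)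
    (fun w hw => by
      rw [hexc, hfe w hw, hge w hw]
      have : 0 ≤ K * (if w = s then (1 : ℝ) else 0) := by
        split_ifs <;> simp [hK.le]
      linarith)
  have hps : ∀ a b, ¬ ResEdge E μ x a b → p (a, b) = 0 := fun a b hab =>
    le_antisymm ((hp _).2.trans_eq (hsupp a b hab)) (hp _).1
  have hpaug : IsFracAug E μ γ x τ v p :=
    ⟨fun e => (hp e).1, hps, by simp [hpe v hv], fun w h1 h2 => by simp [hpe w h2, h1]⟩
  have hqe : ∀ w, w ≠ τ →
      resExcess E γ (fun e => K⁻¹ * (h e - p e)) w = if w = s then 1 else 0 := by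
    intro w hw
    rw [resExcess_smul E γ (fun e => h e - p e), resExcess_sub, hexc, hpe w hw, hfe w hw, hge w hw,
      add_sub_cancel_right, inv_mul_cancel_left₀ hK.ne']
  have hqaug : IsFracAug E μ γ x τ s (fun e => K⁻¹ * (h e - p e)) :=
    ⟨fun e => mul_nonneg (inv_nonneg.2 hK.le) (sub_nonneg.2 (hp e).2),
      fun a b hab => by simp [hps a b hab, hsupp a b hab],
      by simp [hqe s hs], fun w h1 h2 => by simp [hqe w h2, h1]⟩
  have hqc := hmin _ hqaug
  rw [augCost_smul E c (fun e => h e - p e), augCost_sub, ← div_eq_inv_mul, le_div_iff₀ hK] at hqc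
  have hpg : augCost E c p ≤ augCost E c g := by linarith
  refine le_trans (sInf_le ?_) (ENNReal.ofReal_le_ofReal hpg)
  exact ⟨p, hpaug, rfl⟩
end

section
/- Let T* > 0, let K ∈ ℕ, let J be a finite set of jobs with sizes p_j satisfying T*/2^{k(j)+1} < p_j ≤ T*/2^{k(j)} for a class k(j) ∈ {0, 1, …, K} for each j ∈ J, and let x : J → [0,1]. Let S ⊆ J be such that for every k ∈ {0, 1, …, K}, the number of jobs j ∈ S with k(j) = k is at most 2 Σ_{j ∈ J : k(j) = k} x_j + 2. Then Σ_{j ∈ S} p_j ≤ 4 Σ_{j ∈ J} x_j p_j + 4 T*. -/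
/-! Within class `m` every size is at most `T*/2^m`, and `T*/2^m` is less than twice any size in
the class. Hence the jobs of `S` in class `m` have total size at most
`(2 ∑ x j + 2) T*/2^m ≤ 4 ∑ x j p j + 2 T*/2^m`, sums being over class `m`. Summing over
`m ≤ K`, the additive terms form a geometric series bounded by `4 T*`. -/

/-- Let `T* > 0`, `K ∈ ℕ`, `J` a finite set of jobs with sizes `p j` satisfying
`T*/2^(k j + 1) < p j ≤ T*/2^(k j)` for a class `k j ∈ {0, …, K}`, and `x : J → [0,1]`.
If `S ⊆ J` is such that for every class `m ≤ K` the number of jobs of `S` in class `m` is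
at most `2 ∑_{j : k j = m} x j + 2`, then `∑_{j ∈ S} p j ≤ 4 ∑_j x j p j + 4 T*`. -/
theorem stmt13 {J : Type} [Fintype J] [DecidableEq J]
    (Tstar : ℝ) (hT : 0 < Tstar) (K : ℕ)
    (p : J → ℝ) (k : J → ℕ) (hk : ∀ j, k j ≤ K)
    (hp : ∀ j, Tstar / 2 ^ (k j + 1) < p j ∧ p j ≤ Tstar / 2 ^ (k j))
    (x : J → ℝ) (hx : ∀ j, 0 ≤ x j ∧ x j ≤ 1)
    (S : Finset J)
    (hS : ∀ m ≤ K,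
      ((S.filter (fun j => k j = m)).card : ℝ)
        ≤ 2 * (∑ j ∈ Finset.univ.filter (fun j => k j = m), x j) + 2) :
    ∑ j ∈ S, p j ≤ 4 * (∑ j : J, x j * p j) + 4 * Tstar := by
  have hmaps : ∀ j : J, k j ∈ Finset.range (K + 1) := fun j =>
    Finset.mem_range.2 (Nat.lt_succ_of_le (hk j))
  have hclass : ∀ m ∈ Finset.range (K + 1),
      ∑ j ∈ S with k j = m, p j
        ≤ 4 * (∑ j with k j = m, x j * p j) + 2 * Tstar * (1 / 2) ^ m := by
    intro m hm
    have hupper : ∑ j ∈ S with k j = m, p j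
        ≤ ((S.filter (fun j => k j = m)).card : ℝ) * (Tstar / 2 ^ m) := by
      rw [← nsmul_eq_mul]
      refine Finset.sum_le_card_nsmul _ _ _ fun j hj => ?_
      rw [← (Finset.mem_filter.1 hj).2]
      exact (hp j).2
    have hlower : (∑ j with k j = m, x j) * (Tstar / 2 ^ m)
        ≤ 2 * ∑ j with k j = m, x j * p j := by
      rw [Finset.sum_mul, Finset.mul_sum]
      refine Finset.sum_le_sum fun j hj => ?_
      have hsize : Tstar / 2 ^ m ≤ 2 * p j := by
        have h := (hp j).1
        rw [(Finset.mem_filter.1 hj).2, pow_succ, ← div_div] at h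
        linarith
      linarith [mul_le_mul_of_nonneg_left hsize (hx j).1]
    have hcount := mul_le_mul_of_nonneg_right
      (hS m (Nat.le_of_lt_succ (Finset.mem_range.1 hm)))
      (by positivity : 0 ≤ Tstar / 2 ^ m)
    have hpow : 2 * Tstar * (1 / 2) ^ m = 2 * (Tstar / 2 ^ m) := by
      rw [one_div_pow]
      ring
    rw [hpow]
    linarith
  have hgeom : ∑ m ∈ Finset.range (K + 1), ((1 : ℝ) / 2) ^ m ≤ 2 :=
    sum_geometric_two_le (K + 1)
  rw [← Finset.sum_fiberwise_of_maps_to (fun j _ => hmaps j) p,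
    ← Finset.sum_fiberwise_of_maps_to (s := Finset.univ) (fun j _ => hmaps j)
      (fun j => x j * p j)]
  refine (Finset.sum_le_sum hclass).trans ?_
  rw [Finset.sum_add_distrib, ← Finset.mul_sum, ← Finset.mul_sum]
  linarith [mul_le_mul_of_nonneg_left hgeom hT.le]
end

section
/- Let L ∈ ℕ and fix a leaf u ∈ {0,1}^L. For each of the L+1 prefixes v of u, let J_v be a set of 2^{L−|v|} jobs, the sets J_v pairwise disjoint, where each job in J_v may be placed on any machine in M_v = Λ°(v) × {0,1}, with Λ°(v) the set of strings in {0,1}^L having v as a prefix. Then there exists an injective map σ from the union of the sets J_v into {0,1}^L × {0,1} such that σ(j) ∈ M_v for every prefix v of u and every job j ∈ J_v. -/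
/-!
The machine sets `M_k` of the prefixes of `u` are nested, and for `k < L` the difference
`M_k \ M_{k+1}` consists of the pairs `(w, b)` such that `w` agrees with `u` strictly before
position `k` and differs from it at position `k`. There are `2^(L-k)` of these, exactly enough
for the jobs of `Jv k`, and these differences are pairwise disjoint; the single job of `Jv L`
goes to one of the two machines of the leaf `u`. `exists_layer_placement` places one set of jobs
inside its own layer, and the theorem glues these placements together.
-/

/-- A set of `2^(L-k)` jobs fits injectively into the layer of machines whose leaf agrees with `u`
before position `k` and differs from `u` at position `k` (the latter is vacuous for `k = L`). -/
theorem exists_layer_placement {L : ℕ} (u : Fin L → Bool) {J : Type} (S : Finset J) (k : ℕ)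
    (hS : S.card = 2 ^ (L - k)) :
    ∃ g : J → (Fin L → Bool) × Bool, Set.InjOn g S ∧
      (∀ j, ∀ i : Fin L, (i : ℕ) < k → (g j).1 i = u i) ∧
      (∀ j, ∀ i : Fin L, (i : ℕ) = k → (g j).1 i ≠ u i) := by
  classical
  have hfree : Fintype.card {i : Fin L // k ≤ (i : ℕ)} = L - k := by
    have h := Fintype.card_subtype_compl (fun i : Fin L => (i : ℕ) < k)
    have h' : Fintype.card {i : Fin L // (i : ℕ) < k} = min k L := by
      rw [Fintype.card_subtype, Fin.card_filter_val_lt, min_comm]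
    simp only [not_lt, h', Fintype.card_fin] at h
    omega
  -- Label the jobs injectively by bit strings on the positions `≥ k`.
  obtain ⟨e⟩ : Nonempty (S ↪ ({i : Fin L // k ≤ (i : ℕ)} → Bool)) :=
    Function.Embedding.nonempty_of_card_le (by simp [hS, hfree])
  let x : J → {i : Fin L // k ≤ (i : ℕ)} → Bool :=
    fun j => if h : j ∈ S then e ⟨j, h⟩ else fun _ => false
  have hx : Set.InjOn x S := by
    intro j hj j' hj' h
    have hj : j ∈ S := hj
    have hj' : j' ∈ S := hj'
    simpa [x, hj, hj'] using h
  -- The bit of the label at position `k` is stored in the second component of the machine,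
  -- because the leaf must carry `!u k` there.
  let g : J → (Fin L → Bool) × Bool := fun j =>
    (fun i => if h : k ≤ (i : ℕ) then (if (i : ℕ) = k then !u i else x j ⟨i, h⟩) else u i,
      if h : k < L then x j ⟨⟨k, h⟩, le_rfl⟩ else false)
  refine ⟨g, ?_, ?_, ?_⟩
  · intro j hj j' hj' h
    refine hx hj hj' (funext ?_)
    rintro ⟨i, hi⟩
    by_cases hik : (i : ℕ) = k
    · subst hik
      simpa [g] using congrArg Prod.snd h
    · simpa [g, hi, hik] using congrFun (congrArg Prod.fst h) i
  · intro j i hi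
    simp [g, not_le.mpr hi]
  · intro j i hi
    simp [g, hi]


/-- Fix a leaf `u ∈ {0,1}^L`.  For each of the `L+1` prefixes of `u` (identified with
their lengths `k : Fin (L+1)`), let `Jv k` be a set of `2^(L−k)` jobs, the sets pairwise
disjoint, where a job of `Jv k` may be placed on any machine `(w, b)` whose leaf `w`
extends the length-`k` prefix of `u`.  Then there is an injective map `σ` from the union
of the `Jv k` into the machines `{0,1}^L × {0,1}` placing every job on an allowed
machine. -/
theorem stmt15 (L : ℕ) (u : Fin L → Bool)
    {J : Type} [DecidableEq J] (Jv : Fin (L + 1) → Finset J)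
    (hdisj : ∀ k k' : Fin (L + 1), k ≠ k' → Disjoint (Jv k) (Jv k'))
    (hcard : ∀ k : Fin (L + 1), (Jv k).card = 2 ^ (L - (k : ℕ))) :
    ∃ σ : J → (Fin L → Bool) × Bool,
      (∀ k : Fin (L + 1), ∀ j ∈ Jv k, ∀ i : Fin L, (i : ℕ) < (k : ℕ) → (σ j).1 i = u i) ∧
      Set.InjOn σ (⋃ k : Fin (L + 1), (Jv k : Set J)) := by
  classical
  choose g hinj hlt heq using fun k : Fin (L + 1) => exists_layer_placement u (Jv k) k (hcard k)
  let σ : J → (Fin L → Bool) × Bool :=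
    fun j => if h : ∃ k, j ∈ Jv k then g h.choose j else (u, false)
  have hσ : ∀ k, ∀ j ∈ Jv k, σ j = g k j := by
    intro k j hj
    have h : ∃ k, j ∈ Jv k := ⟨k, hj⟩
    have hk : h.choose = k := by
      by_contra hne
      exact Finset.disjoint_left.mp (hdisj _ _ hne) h.choose_spec hj
    simp only [σ, dif_pos h, hk]
  -- Distinct layers are disjoint: they are told apart at the position of the smaller index.
  have hsep : ∀ k k' : Fin (L + 1), k < k' → ∀ j j', g k j ≠ g k' j' := by
    intro k k' hkk j j' h
    have hkL : (k : ℕ) < L := by have := k'.isLt; have : (k : ℕ) < k' := hkk; omega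
    refine heq k j ⟨k, hkL⟩ rfl ?_
    rw [h]
    exact hlt k' j' ⟨k, hkL⟩ hkk
  refine ⟨σ, ?_, ?_⟩
  · intro k j hj i hi
    rw [hσ k j hj]
    exact hlt k j i hi
  · intro j hj j' hj' h
    obtain ⟨k, hk⟩ := Set.mem_iUnion.mp hj
    obtain ⟨k', hk'⟩ := Set.mem_iUnion.mp hj'
    rw [hσ k j hk, hσ k' j' hk'] at h
    rcases lt_trichotomy k k' with hlt' | rfl | hgt
    · exact absurd h (hsep k k' hlt' j j')
    · exact hinj k hk hk' h
    · exact absurd h.symm (hsep k' k hgt j' j)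
end

section
/- Let M be a finite set, let x, x° : M → ℝ_{≥0} with Σ_{i ∈ M} x_i = Σ_{i ∈ M} x°_i = 1, let B ⊆ M, and set p = Σ_{i ∈ B} x_i and p° = Σ_{i ∈ B} x°_i. If β is a random variable uniformly distributed on the interval [1/2, 3/4], then the probability that exactly one of the events {p > β} and {p° > β} occurs is at most 2 Σ_{i ∈ M} |x_i − x°_i|. -/
/-!
Write `p`, `p'` for the masses that `x`, `x'` give to `B`. Exactly one of `p > β`, `p' > β` holds
only if `β` lies between `p` and `p'`, a set of Lebesgue measure `|p - p'|`, so the probability is at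
most `4 |p - p'|`. As `x` and `x'` have the same total mass, the differences over `B` and over its
complement cancel, whence `2 |p - p'| ≤ ∑ i, |x i - x' i|` (`two_mul_abs_sub_le`).
-/

open MeasureTheory

/-- The total variation bound: for equal total masses, the masses of a set differ by at most half
the `ℓ¹` distance. -/
lemma two_mul_abs_sub_le {M : Type} [Fintype M] (x x' : M → ℝ)
    (h : ∑ i, x i = ∑ i, x' i) (B : Finset M) :
    2 * |∑ i ∈ B, x' i - ∑ i ∈ B, x i| ≤ ∑ i, |x i - x' i| := by
  classical
  have e1 := Finset.sum_add_sum_compl B x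
  have e2 := Finset.sum_add_sum_compl B x'
  have e3 := Finset.sum_add_sum_compl B (fun i => |x i - x' i|)
  have a1 := Finset.abs_sum_le_sum_abs (fun i => x i - x' i) B
  have a2 := Finset.abs_sum_le_sum_abs (fun i => x i - x' i) Bᶜ
  rw [Finset.sum_sub_distrib] at a1 a2
  have e4 : ∑ i ∈ Bᶜ, x i - ∑ i ∈ Bᶜ, x' i = ∑ i ∈ B, x' i - ∑ i ∈ B, x i := by linarith
  rw [e4] at a2
  rw [abs_sub_comm] at a1
  linarith

/-- Let `M` be a finite set, `x, x° : M → ℝ≥0` each summing to `1`, `B ⊆ M`,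
`p = ∑_{i ∈ B} x i` and `p° = ∑_{i ∈ B} x° i`.  If `β` is uniformly distributed on
`[1/2, 3/4]`, then the probability that exactly one of the events `{p > β}` and
`{p° > β}` occurs is at most `2 ∑_i |x i − x° i|`.  (The uniform probability measure on
`[1/2, 3/4]` is `4` times Lebesgue measure restricted to that interval.) -/
theorem stmt16 {M : Type} [Fintype M] (x x' : M → ℝ)
    (hx0 : ∀ i, 0 ≤ x i) (hx'0 : ∀ i, 0 ≤ x' i)
    (hx1 : ∑ i : M, x i = 1) (hx'1 : ∑ i : M, x' i = 1)
    (B : Finset M) :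
    4 * volume {β ∈ Set.Icc (1 / 2 : ℝ) (3 / 4) |
        Xor' ((∑ i ∈ B, x i) > β) ((∑ i ∈ B, x' i) > β)}
      ≤ ENNReal.ofReal (2 * ∑ i : M, |x i - x' i|) := by
  have hsub : {β ∈ Set.Icc (1 / 2 : ℝ) (3 / 4) |
        Xor' ((∑ i ∈ B, x i) > β) ((∑ i ∈ B, x' i) > β)}
      ⊆ Set.uIcc (∑ i ∈ B, x i) (∑ i ∈ B, x' i) := by
    rintro β ⟨-, ⟨h1, h2⟩ | ⟨h1, h2⟩⟩
    · exact Set.mem_uIcc.2 (Or.inr ⟨not_lt.1 h2, h1.le⟩)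
    · exact Set.mem_uIcc.2 (Or.inl ⟨not_lt.1 h2, h1.le⟩)
  calc _ ≤ 4 * volume (Set.uIcc (∑ i ∈ B, x i) (∑ i ∈ B, x' i)) := by gcongr
    _ = ENNReal.ofReal (4 * |∑ i ∈ B, x' i - ∑ i ∈ B, x i|) := by
      rw [Real.volume_interval, ENNReal.ofReal_mul (by norm_num), ENNReal.ofReal_ofNat]
    _ ≤ _ := by
      apply ENNReal.ofReal_le_ofReal
      linarith [two_mul_abs_sub_le x x' (hx1.trans hx'1.symm) B]
end

section
/- Let h > 0 and for δ ∈ [0, h] and a ∈ ℝ_{≥0} define r_δ(a) = a if a ≥ h, r_δ(a) = h if a < h and δ ≤ a, and r_δ(a) = 0 if a < h and δ > a. If δ is uniformly distributed on [0, h], then for all a, b ∈ ℝ_{≥0}: E_δ[ r_δ(a) ] = a whenever a ≤ h or a ≥ h (i.e., for all a ≥ 0), and E_δ[ |r_δ(a) − r_δ(b)| ] = |a − b|. -/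
/-!
For fixed `δ`, the rounding `r δ a` is monotone in `a`. Hence for `b ≤ a` the absolute value
`|r δ a - r δ b|` is just `r δ a - r δ b`, and the second identity follows from the first
(`integral_rounding`) by linearity of the integral; the case `a ≤ b` is symmetric.
-/

open MeasureTheory

/-- The rounding `r δ a` of `a` at scale `h` with threshold `δ`. -/
noncomputable def rounding (h a δ : ℝ) : ℝ :=
  if h ≤ a then a else if δ ≤ a then h else 0

lemma rounding_mono {h a b : ℝ} (hh : 0 < h) (hba : b ≤ a) (δ : ℝ) :
    rounding h b δ ≤ rounding h a δ := by
  unfold rounding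
  split_ifs <;> linarith

lemma integrableOn_rounding (h a : ℝ) :
    IntegrableOn (rounding h a) (Set.Icc 0 h) := by
  unfold rounding
  by_cases hA : h ≤ a
  · simp [hA]
  · simp only [hA, if_false]
    exact (integrable_const h).indicator (s := Set.Iic a) measurableSet_Iic

lemma integral_rounding {h a : ℝ} (hh : 0 < h) (ha : 0 ≤ a) :
    ∫ δ in Set.Icc (0 : ℝ) h, rounding h a δ = a * h := by
  unfold rounding
  by_cases hA : h ≤ a
  · simp [hA, hh.le, mul_comm]
  · simp only [hA, if_false]
    change ∫ δ in Set.Icc (0 : ℝ) h, (Set.Iic a).indicator (fun _ => h) δ = a * h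
    have hs : Set.Icc (0 : ℝ) h ∩ Set.Iic a = Set.Icc 0 a := by
      ext x
      simp only [Set.mem_inter_iff, Set.mem_Icc, Set.mem_Iic]
      grind
    rw [setIntegral_indicator measurableSet_Iic, hs]
    simp [ha]

lemma integral_abs_sub_rounding {h a b : ℝ} (hh : 0 < h) (hb : 0 ≤ b) (hba : b ≤ a) :
    ∫ δ in Set.Icc (0 : ℝ) h, |rounding h a δ - rounding h b δ| = (a - b) * h := by
  simp_rw [fun δ => abs_of_nonneg (sub_nonneg.2 (rounding_mono hh hba δ))]
  rw [integral_sub (integrableOn_rounding h a) (integrableOn_rounding h b),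
    integral_rounding hh (hb.trans hba), integral_rounding hh hb, sub_mul]

/-- Let `h > 0` and, for `δ ∈ [0, h]` and `a ≥ 0`, let `r δ a = a` if `a ≥ h`,
`r δ a = h` if `a < h` and `δ ≤ a`, and `r δ a = 0` if `a < h` and `δ > a`.  If `δ` is
uniformly distributed on `[0, h]`, then for all `a, b ≥ 0`:
`E_δ[r δ a] = a` and `E_δ[|r δ a − r δ b|] = |a − b|`
(the expectations are `1/h` times the corresponding Lebesgue integrals over `[0, h]`). -/
theorem stmt17 (h : ℝ) (hh : 0 < h) (a b : ℝ) (ha : 0 ≤ a) (hb : 0 ≤ b) :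
    (∫ δ in Set.Icc (0 : ℝ) h,
        (if h ≤ a then a else if δ ≤ a then h else 0)) / h = a ∧
    (∫ δ in Set.Icc (0 : ℝ) h,
        |(if h ≤ a then a else if δ ≤ a then h else 0)
          - (if h ≤ b then b else if δ ≤ b then h else 0)|) / h = |a - b| := by
  change (∫ δ in Set.Icc (0 : ℝ) h, rounding h a δ) / h = a ∧
    (∫ δ in Set.Icc (0 : ℝ) h, |rounding h a δ - rounding h b δ|) / h = |a - b|
  refine ⟨by rw [integral_rounding hh ha, mul_div_cancel_right₀ _ hh.ne'], ?_⟩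
  rw [div_eq_iff hh.ne']
  rcases le_total b a with hba | hab
  · rw [integral_abs_sub_rounding hh hb hba, abs_of_nonneg (sub_nonneg.2 hba)]
  · simp_rw [abs_sub_comm (rounding h a _)]
    rw [integral_abs_sub_rounding hh ha hab, abs_sub_comm, abs_of_nonneg (sub_nonneg.2 hab)]
end
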